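/- Let y₀ ∈ ℝⁿ with Dg(y₀) ≠ 0 and suppose liminf_{y → y₀} t̄ₛ(y) < t̄ₛ(y₀) (liminf in [0,∞] along the punctured neighborhood filter of y₀; t̄ₛ(y₀) may be ∞). Then for every real t₀ with liminf_{y → y₀} t̄ₛ(y) < t₀ < t̄ₛ(y₀), setting x₀ = X(y₀,t₀), for every ε > 0 there exists x_ε with |x_ε − x₀| ≤ ε such that u is not (Fréchet) differentiable at (x_ε, t₀). -/

import Mathlib

open scoped InnerProductSpace Topology ENNReal
open Filter

noncomputable section

/-- Euclidean space `ℝⁿ`. -/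
abbrev Euc (n : ℕ) := EuclideanSpace ℝ (Fin n)

/-- Hopf–Lax solution of the Eikonal equation `uₜ + |∇u| = 0` with initial data `g`:
`u(x,t) = min {g(y) : |y - x| ≤ t}`. -/
def HLu {n : ℕ} (g : Euc n → ℝ) (x : Euc n) (t : ℝ) : ℝ :=
  sInf (g '' Metric.closedBall x t)

/-- The set of minimizers `L(x,t) = {y : |y - x| ≤ t ∧ g y = u(x,t)}`. -/
def HLL {n : ℕ} (g : Euc n → ℝ) (x : Euc n) (t : ℝ) : Set (Euc n) :=
  {y | ‖y - x‖ ≤ t ∧ g y = HLu g x t}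

/-- The characteristic from `y₀`: `X(y₀,t) = y₀ + t • Dg(y₀)/|Dg(y₀)|`. -/
def charX {n : ℕ} (Dg : Euc n → Euc n) (y₀ : Euc n) (t : ℝ) : Euc n :=
  y₀ + t • (‖Dg y₀‖⁻¹ • Dg y₀)

/-- First termination time `t̄ₛ(y₀) = sup {t > 0 : L(X(y₀,t),t) = {y₀}}`, in `[0,∞]`
(`sup ∅ = 0`). -/
def tbar {n : ℕ} (g : Euc n → ℝ) (Dg : Euc n → Euc n) (y₀ : Euc n) : ℝ≥0∞ :=
  sSup (ENNReal.ofReal '' {t : ℝ | 0 < t ∧ HLL g (charX Dg y₀ t) t = {y₀}})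

/-- Second termination time `tₛ(y₀) = inf {t > 0 : y₀ ∉ L(X(y₀,t),t)}`, in `[0,∞]`
(`inf ∅ = ∞`). -/
def tsnd {n : ℕ} (g : Euc n → ℝ) (Dg : Euc n → Euc n) (y₀ : Euc n) : ℝ≥0∞ :=
  sInf (ENNReal.ofReal '' {t : ℝ | 0 < t ∧ y₀ ∉ HLL g (charX Dg y₀ t) t})

/-!
Fix `t` and write `u` for `u(·,t)`. If `y` minimizes `g` on the ball of radius `t` about `x`, then
`x` maximizes `u` on the ball of radius `t` about `y`, so the maximizers of `u` near `y₀` invert the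
characteristic flow. Suppose `u` were differentiable near `x₀ = X(y₀,t)`. As `y₀` is the only
minimizer for `x₀`, Lagrange multipliers make `x₀` the only maximizer for `y₀`. By compactness, for
`y` close to `y₀` every maximizer `x` for `y` is close to `x₀`, hence a point of differentiability
of `u`, with minimizers close to `y₀`. The gradient of `u` at `x` is that of `g` at any of these
minimizers, so it is nonzero, and a nonzero gradient leaves only one `y` with `x` as a maximizer.
Thus `L(x,t) = {y}` and `x = X(y,t)`, so that `t ≤ t̄ₛ(y)` for all `y` near `y₀`.
-/

section Gradient

variable {E : Type*} [NormedAddCommGroup E] [InnerProductSpace ℝ E] [CompleteSpace E]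
  {f : E → ℝ} {p x y : E} {t : ℝ}

lemma norm_mul_le_inner_of_isMinOn_closedBall (hy : y ∈ Metric.closedBall x t)
    (hmin : IsMinOn f (Metric.closedBall x t) y) (hp : HasGradientAt f p y) :
    ‖p‖ * t ≤ ⟪p, x - y⟫_ℝ := by
  have ht : 0 ≤ t := dist_nonneg.trans hy
  set z := x - t • ‖p‖⁻¹ • p with hz
  have hz_mem : z ∈ Metric.closedBall x t := by
    have hunit : ‖‖p‖⁻¹ • p‖ ≤ 1 := by simpa using inv_norm_smul_mem_unitClosedBall p
    rw [Metric.mem_closedBall, dist_eq_norm, hz, sub_sub_cancel_left, norm_neg, norm_smul,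
      Real.norm_of_nonneg ht]
    exact mul_le_of_le_one_right ht hunit
  have hnonneg : 0 ≤ ⟪p, z - y⟫_ℝ := by
    simpa using hmin.localize.hasFDerivWithinAt_nonneg hp.hasFDerivAt.hasFDerivWithinAt
      (sub_mem_posTangentConeAt_of_segment_subset
        ((convex_closedBall x t).segment_subset hy hz_mem))
  have hinner : ⟪p, z - y⟫_ℝ = ⟪p, x - y⟫_ℝ - ‖p‖ * t := by
    rw [hz, sub_right_comm, inner_sub_right, real_inner_smul_right, real_inner_smul_right,
      real_inner_self_eq_norm_mul_norm, ← mul_assoc ‖p‖⁻¹, inv_mul_mul_self, mul_comm]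
  linarith

lemma center_eq_add_smul_of_isMinOn_closedBall (hy : y ∈ Metric.closedBall x t)
    (hmin : IsMinOn f (Metric.closedBall x t) y) (hp : HasGradientAt f p y) (hp0 : p ≠ 0) :
    x = y + t • ‖p‖⁻¹ • p := by
  have hp_pos : 0 < ‖p‖ := norm_pos_iff.2 hp0
  have hdist : ‖x - y‖ ≤ t := by rwa [← dist_eq_norm, dist_comm]
  have hle := norm_mul_le_inner_of_isMinOn_closedBall hy hmin hp
  have hcauchy : ⟪p, x - y⟫_ℝ = ‖p‖ * ‖x - y‖ :=
    (real_inner_le_norm p (x - y)).antisymm ((by gcongr : ‖p‖ * ‖x - y‖ ≤ ‖p‖ * t).trans hle)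
  have hnorm : ‖x - y‖ = t :=
    hdist.antisymm (le_of_mul_le_mul_left (hle.trans_eq hcauchy) hp_pos)
  have hparallel : t • p = ‖p‖ • (x - y) := hnorm ▸ inner_eq_norm_mul_iff_real.1 hcauchy
  rw [smul_comm, hparallel, inv_smul_smul₀ hp_pos.ne', add_sub_cancel]

end Gradient

section HopfLax

variable {n : ℕ} {g : Euc n → ℝ} {x y z : Euc n} {t : ℝ}

lemma continuous_HLu (hg : Continuous g) (t : ℝ) : Continuous fun x ↦ HLu g x t := by
  have htranslate (x : Euc n) :
      HLu g x t = sInf ((fun z ↦ g (x + z)) '' Metric.closedBall 0 t) := by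
    rw [HLu, ← Set.image_image g (x + ·), Set.image_add_left, preimage_add_closedBall, zero_sub,
      neg_neg]
  simp_rw [htranslate]
  exact (isCompact_closedBall 0 t).continuous_sInf (by fun_prop)

lemma HLu_le (hg : Continuous g) (hy : y ∈ Metric.closedBall x t) : HLu g x t ≤ g y :=
  csInf_le ((isCompact_closedBall x t).image hg).bddBelow (Set.mem_image_of_mem g hy)

lemma mem_HLL_iff_isMinOn (hg : Continuous g) :
    y ∈ HLL g x t ↔ y ∈ Metric.closedBall x t ∧ IsMinOn g (Metric.closedBall x t) y := by
  rw [HLL, Set.mem_ofPred_eq, ← dist_eq_norm, ← Metric.mem_closedBall]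
  refine and_congr_right fun hy ↦ ⟨fun h z hz ↦ h.trans_le (HLu_le hg hz), fun hmin ↦ ?_⟩
  refine le_antisymm (le_csInf ⟨g y, Set.mem_image_of_mem g hy⟩ ?_) (HLu_le hg hy)
  exact Set.forall_mem_image.2 hmin

lemma HLL_nonempty (hg : Continuous g) (x : Euc n) (ht : 0 ≤ t) : (HLL g x t).Nonempty := by
  obtain ⟨y, hy⟩ := (isCompact_closedBall x t).exists_isMinOn
    (Metric.nonempty_closedBall.2 ht) hg.continuousOn
  exact ⟨y, (mem_HLL_iff_isMinOn hg).2 hy⟩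

lemma upperHemicontinuous_HLL (hg : Continuous g) (t : ℝ) :
    UpperHemicontinuous fun x ↦ HLL g x t := by
  intro x₀
  refine UpperHemicontinuousAt.of_sequences (isCompact_closedBall x₀ (t + 1)).isSeqCompact ?_ ?_
  · filter_upwards [Metric.ball_mem_nhds x₀ one_pos] with x hx y hy
    have hyx : dist y x ≤ t := (dist_eq_norm y x).trans_le hy.1
    exact (dist_triangle y x x₀).trans (add_le_add hyx hx.le)
  · intro x hx y hy y₀ hy₀
    refine ⟨le_of_tendsto (hy₀.sub hx).norm (.of_forall fun k ↦ (hy k).1), ?_⟩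
    have hu : Tendsto (fun k ↦ g (y k)) atTop (𝓝 (HLu g x₀ t)) := by
      simpa only [(hy _).2, Function.comp_def] using ((continuous_HLu hg t).tendsto x₀).comp hx
    exact tendsto_nhds_unique ((hg.tendsto y₀).comp hy₀) hu

lemma eventually_HLL_subset_of_eq_singleton (hg : Continuous g) (hx : HLL g x t = {y})
    {U : Set (Euc n)} (hU : U ∈ 𝓝 y) : ∀ᶠ x' in 𝓝 x, HLL g x' t ⊆ U :=
  have hU' : U ∈ 𝓝ˢ (HLL g x t) := by rwa [hx, nhdsSet_singleton]
  (upperHemicontinuous_HLL hg t x U hU').mono fun _ ↦ subset_of_mem_nhdsSet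

lemma HLL_eq_inter_closedBall (hg : Continuous g) {x' : Euc n} {s : ℝ}
    (hsub : Metric.closedBall x s ⊆ Metric.closedBall x' t)
    (hne : (HLL g x' t ∩ Metric.closedBall x s).Nonempty) :
    HLL g x s = HLL g x' t ∩ Metric.closedBall x s := by
  obtain ⟨y, hy, hyx⟩ := hne
  have hle : ∀ w ∈ Metric.closedBall x' t, g y ≤ g w :=
    isMinOn_iff.1 ((mem_HLL_iff_isMinOn hg).1 hy).2
  ext z
  simp only [Set.mem_inter_iff, mem_HLL_iff_isMinOn hg]
  refine ⟨fun ⟨hzx, hz⟩ ↦ ⟨⟨hsub hzx, isMinOn_iff.2 fun w hw ↦ ?_⟩, hzx⟩,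
    fun ⟨⟨_, hz⟩, hzx⟩ ↦ ⟨hzx, hz.on_subset hsub⟩⟩
  exact (isMinOn_iff.1 hz y hyx).trans (hle w hw)

lemma gradient_HLu_eq_of_mem_HLL (hg : Continuous g) (hy : y ∈ HLL g x t) {p q : Euc n}
    (hp : HasGradientAt g p y) (hq : HasGradientAt (fun x ↦ HLu g x t) q x) : q = p := by
  have hp' := (hasFDerivAt_comp_add_left y).2 ((add_zero y).symm ▸ hp.hasFDerivAt)
  have hq' := (hasFDerivAt_comp_add_left x).2 ((add_zero x).symm ▸ hq.hasFDerivAt)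
  have hmin : IsLocalMin (fun h ↦ g (y + h) - HLu g (x + h) t) 0 := by
    refine .of_forall fun h ↦ ?_
    have hle : HLu g (x + h) t ≤ g (y + h) :=
      HLu_le hg (by simpa [dist_eq_norm] using hy.1)
    simpa [hy.2] using hle
  have hzero := hmin.hasFDerivAt_eq_zero (hp'.sub hq')
  exact ((InnerProductSpace.toDual ℝ (Euc n)).injective (sub_eq_zero.1 hzero)).symm

/-- The maximizers of `u(·,t)` on the closed ball of radius `t` about `y`, which invert the
characteristic map `X(·,t)`. They are encoded as the minimizers `L(y,t)` for the initial data
`-u(·,t)`, so that every result about minimizers applies to them. -/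
def HLuMaximizers (g : Euc n → ℝ) (y : Euc n) (t : ℝ) : Set (Euc n) :=
  HLL (fun x ↦ -HLu g x t) y t

lemma mem_HLuMaximizers_of_mem_HLL (hg : Continuous g) (hy : y ∈ HLL g x t) :
    x ∈ HLuMaximizers g y t := by
  refine (mem_HLL_iff_isMinOn (continuous_HLu hg t).fun_neg).2
    ⟨by simpa [dist_eq_norm, norm_sub_rev] using hy.1, isMinOn_iff.2 fun z hz ↦ neg_le_neg ?_⟩
  exact hy.2 ▸ HLu_le hg (Metric.mem_closedBall_comm.1 hz)

lemma mem_HLL_of_mem_HLuMaximizers (hg : Continuous g) (hy : y ∈ HLL g x t)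
    (hz : z ∈ HLuMaximizers g y t) : y ∈ HLL g z t := by
  have hxz : -HLu g x t = -HLu g z t :=
    (mem_HLuMaximizers_of_mem_HLL hg hy).2.trans hz.2.symm
  exact ⟨norm_sub_rev z y ▸ hz.1, hy.2.trans (neg_injective hxz)⟩

lemma HLuMaximizers_eq_singleton (hg : Continuous g) (hy : y ∈ HLL g x t) {p : Euc n}
    (hp : HasGradientAt g p y) (hp0 : p ≠ 0) : HLuMaximizers g y t = {x} := by
  have center_eq {z : Euc n} (hz : y ∈ HLL g z t) : z = y + t • ‖p‖⁻¹ • p :=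
    have hmin := (mem_HLL_iff_isMinOn hg).1 hz
    center_eq_add_smul_of_isMinOn_closedBall hmin.1 hmin.2 hp hp0
  refine Set.eq_singleton_iff_unique_mem.2 ⟨mem_HLuMaximizers_of_mem_HLL hg hy, fun z hz ↦ ?_⟩
  rw [center_eq hy, center_eq (mem_HLL_of_mem_HLuMaximizers hg hy hz)]

lemma eq_add_smul_of_mem_HLuMaximizers (hg : Continuous g) (hx : x ∈ HLuMaximizers g y t)
    {q : Euc n} (hq : HasGradientAt (fun x ↦ HLu g x t) q x) (hq0 : q ≠ 0) :
    x = y + t • ‖q‖⁻¹ • q := by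
  obtain ⟨hxy, hmin⟩ := (mem_HLL_iff_isMinOn (continuous_HLu hg t).fun_neg).1 hx
  have hneg : HasGradientAt (fun x ↦ -HLu g x t) (-q) x := by
    simpa only [hasGradientAt_iff_hasFDerivAt, map_neg] using hq.hasFDerivAt.fun_neg
  have hy := center_eq_add_smul_of_isMinOn_closedBall hxy hmin hneg (neg_ne_zero.2 hq0)
  rw [norm_neg, smul_neg, smul_neg, ← sub_eq_add_neg] at hy
  exact eq_add_of_sub_eq hy.symm

end HopfLax

section TerminationTime

variable {n : ℕ} {g : Euc n → ℝ} {Dg : Euc n → Euc n} {x y y₀ : Euc n} {t : ℝ}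

lemma dist_charX_le (Dg : Euc n → Euc n) (y : Euc n) (s t : ℝ) :
    dist (charX Dg y s) (charX Dg y t) ≤ |s - t| := by
  have hunit : ‖‖Dg y‖⁻¹ • Dg y‖ ≤ 1 := by simpa using inv_norm_smul_mem_unitClosedBall (Dg y)
  rw [charX, charX, dist_add_left, dist_eq_norm, ← sub_smul, norm_smul, Real.norm_eq_abs]
  exact mul_le_of_le_one_right (abs_nonneg _) hunit

lemma mem_closedBall_charX (Dg : Euc n → Euc n) (y : Euc n) (ht : 0 ≤ t) :
    y ∈ Metric.closedBall (charX Dg y t) t := by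
  simpa [charX, abs_of_nonneg ht] using dist_charX_le Dg y 0 t

lemma HLL_charX_eq_singleton_of_lt_tbar (hg : Continuous g) (ht : 0 ≤ t)
    (hlt : ENNReal.ofReal t < tbar g Dg y) : HLL g (charX Dg y t) t = {y} := by
  obtain ⟨_, ⟨r, ⟨hr_pos, hr⟩, rfl⟩, htr⟩ := lt_sSup_iff.1 hlt
  have htr : t < r := (ENNReal.ofReal_lt_ofReal_iff hr_pos).1 htr
  have hsub : Metric.closedBall (charX Dg y t) t ⊆ Metric.closedBall (charX Dg y r) r := by
    refine Metric.closedBall_subset_closedBall' ?_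
    have hdist := dist_charX_le Dg y t r
    rw [abs_of_neg (sub_neg.2 htr)] at hdist
    linarith
  have hy := mem_closedBall_charX Dg y ht
  rw [HLL_eq_inter_closedBall hg hsub ⟨y, hr ▸ rfl, hy⟩, hr]
  exact Set.inter_eq_left.2 (Set.singleton_subset_iff.2 hy)

lemma HLL_charX_eq_singleton_of_differentiableAt (hg : Continuous g) (ht : 0 ≤ t)
    (hx : x ∈ HLuMaximizers g y t) (hd : DifferentiableAt ℝ (fun x ↦ HLu g x t) x)
    (hDg : ∀ z ∈ HLL g x t, HasGradientAt g (Dg z) z ∧ Dg z ≠ 0) :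
    HLL g (charX Dg y t) t = {y} := by
  set q := gradient (fun x ↦ HLu g x t) x
  have hq {z : Euc n} (hz : z ∈ HLL g x t) : q = Dg z :=
    gradient_HLu_eq_of_mem_HLL hg hz (hDg z hz).1 hd.hasGradientAt
  have hne : (HLL g x t).Nonempty := HLL_nonempty hg x ht
  have hq0 : q ≠ 0 := by
    obtain ⟨z, hz⟩ := hne
    exact hq hz ▸ (hDg z hz).2
  have hxq {z : Euc n} (hz : x ∈ HLuMaximizers g z t) : x = z + t • ‖q‖⁻¹ • q :=
    eq_add_smul_of_mem_HLuMaximizers hg hz hd.hasGradientAt hq0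
  have hsingleton : HLL g x t = {y} := hne.subset_singleton_iff.1 fun z hz ↦
    add_right_cancel ((hxq (mem_HLuMaximizers_of_mem_HLL hg hz)).symm.trans (hxq hx))
  have hchar : charX Dg y t = x := by
    rw [charX, ← hq (hsingleton ▸ rfl), ← hxq hx]
  rw [hchar, hsingleton]

lemma eventually_le_tbar_of_eventually_differentiableAt (hg : Continuous g)
    (hDg : ∀ᶠ y in 𝓝 y₀, HasGradientAt g (Dg y) y ∧ Dg y ≠ 0) (ht : 0 < t)
    (hlt : ENNReal.ofReal t < tbar g Dg y₀)
    (hd : ∀ᶠ x in 𝓝 (charX Dg y₀ t), DifferentiableAt ℝ (fun x ↦ HLu g x t) x) :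
    ∀ᶠ y in 𝓝 y₀, ENNReal.ofReal t ≤ tbar g Dg y := by
  have hmin : HLL g (charX Dg y₀ t) t = {y₀} := HLL_charX_eq_singleton_of_lt_tbar hg ht.le hlt
  have hmax : HLuMaximizers g y₀ t = {charX Dg y₀ t} :=
    HLuMaximizers_eq_singleton hg (hmin ▸ rfl) hDg.self_of_nhds.1 hDg.self_of_nhds.2
  have hgood := hd.and (eventually_HLL_subset_of_eq_singleton hg hmin hDg)
  have hu : Continuous fun x ↦ -HLu g x t := (continuous_HLu hg t).fun_neg
  filter_upwards [eventually_HLL_subset_of_eq_singleton hu hmax hgood] with y hy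
  obtain ⟨x, hx⟩ := HLL_nonempty hu y ht.le
  obtain ⟨hdx, hDgx⟩ := hy hx
  exact le_sSup ⟨t, ⟨ht, HLL_charX_eq_singleton_of_differentiableAt hg ht.le hx hdx hDgx⟩, rfl⟩

theorem nondifferentiable_points_near_characteristic_of_liminf_lt_general (hg : Continuous g)
    (hDg : ∀ᶠ y in 𝓝 y₀, HasGradientAt g (Dg y) y ∧ Dg y ≠ 0)
    (hliminf : liminf (tbar g Dg) (𝓝[≠] y₀) < ENNReal.ofReal t)
    (hlt : ENNReal.ofReal t < tbar g Dg y₀) :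
    ∃ᶠ x in 𝓝 (charX Dg y₀ t), ¬DifferentiableAt ℝ (fun x ↦ HLu g x t) x := by
  intro hd
  have ht : 0 < t := ENNReal.ofReal_pos.1 (pos_of_gt hliminf)
  have hle := eventually_le_tbar_of_eventually_differentiableAt hg hDg ht hlt
    (hd.mono fun _ ↦ not_not.1)
  exact hliminf.not_ge (le_liminf_of_le (h := hle.filter_mono nhdsWithin_le_nhds))

end TerminationTime

theorem nondifferentiable_points_near_characteristic_of_liminf_lt {n : ℕ} (hn : 0 < n) (g : Euc n → ℝ) (Dg : Euc n → Euc n)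
    (hg : ∀ y, HasGradientAt g (Dg y) y) (hDg : Continuous Dg)
    (y₀ : Euc n) (hy : Dg y₀ ≠ 0)
    (hlt : Filter.liminf (fun y => tbar g Dg y) (𝓝[≠] y₀) < tbar g Dg y₀) :
    ∀ t₀ : ℝ, Filter.liminf (fun y => tbar g Dg y) (𝓝[≠] y₀) < ENNReal.ofReal t₀ →
      ENNReal.ofReal t₀ < tbar g Dg y₀ →
      ∀ ε : ℝ, 0 < ε → ∃ xε : Euc n, ‖xε - charX Dg y₀ t₀‖ ≤ ε ∧
        ¬ DifferentiableAt ℝ (fun p : Euc n × ℝ => HLu g p.1 p.2) (xε, t₀) := by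
  intro t₀ hliminf ht₀ ε hε
  have hgc : Continuous g := continuous_iff_continuousAt.2 fun y ↦ (hg y).continuousAt
  have hgrad : ∀ᶠ y in 𝓝 y₀, HasGradientAt g (Dg y) y ∧ Dg y ≠ 0 :=
    (hDg.continuousAt.eventually_ne hy).mono fun y hy ↦ ⟨hg y, hy⟩
  obtain ⟨x, hx, hxε⟩ := ((nondifferentiable_points_near_characteristic_of_liminf_lt_general
    hgc hgrad hliminf ht₀).and_eventually (Metric.closedBall_mem_nhds _ hε)).exists
  exact ⟨x, mem_closedBall_iff_norm.1 hxε, fun hd ↦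
    hx (hd.comp (f := fun x ↦ (x, t₀)) x (by fun_prop))⟩
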